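/- arXiv:1208.1374 — 2 statements merged into one kernel-verified Lean document; each statement's English description precedes it below -/
import Mathlib

section
/- Let n ≥ 1 and let V_j for j ≥ 1 be the operators V_j = (1/4n)Σ_{k+l=2nj} ∂²/∂t_k∂t_l + (1/2n)Σ_{k odd>0} k t_k ∂/∂t_{k+2nj} on the polynomial ring in variables t_k (k positive odd). Then [V_i, V_j] = (i-j)V_{i+j} for all i, j ≥ 1. -/
/-!
The Virasoro operators `V_j` (`j ≥ 1`) acting on the polynomial ring in the
variables `t_k` (`k` a positive odd integer), realized as `MvPolynomial ℕ ℚ`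
with `X k` playing the role of `t_k` for odd `k`.  The infinite sums are
pointwise finite and are expressed with `∑ᶠ`.
-/

noncomputable section

open MvPolynomial

/-- `V_j = (1/4n) ∑_{k+l=2nj, k,l odd > 0} ∂²/∂t_k ∂t_l
      + (1/2n) ∑_{k odd > 0} k t_k ∂/∂t_{k+2nj}` for `j ≥ 1`. -/
def Vop (n j : ℕ) : MvPolynomial ℕ ℚ → MvPolynomial ℕ ℚ := fun f =>
  (1 / (4 * n) : ℚ) •
      (∑ k ∈ Finset.range (2 * n * j),
        if Odd k then pderiv k (pderiv (2 * n * j - k) f) else 0)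
    + (1 / (2 * n) : ℚ) •
      (∑ᶠ k : ℕ, if Odd k then (k : ℚ) • (X k * pderiv (k + 2 * n * j) f) else 0)

/-!
Put `a = 2nj`, `S_a = ∑_{k+l=a} ∂_k ∂_l` and `D_a = ∑_k k t_k ∂_{k+a}`, so that
`4n V_j = S_a + 2 D_a`. The operators `S_a` commute with each other, and comparing two derivations
on the variables gives `[D_a, D_b] = (a - b) D_{a+b}` and `[∂_k, D_b] = k ∂_{k+b}`. The latter and
the Leibniz rule yield `[S_a, D_b] = ∑_{k+l=a+b} ((k ∸ b) + (l ∸ b)) ∂_k ∂_l` with truncated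
subtraction `∸`. If `k + l = a + b`, then `(k ∸ b) - (l ∸ a) = k - b`, and likewise with `k` and
`l` exchanged, so the cross terms `[S_a, D_b] - [S_b, D_a]` add up to `(a - b) S_{a+b}`.
-/

open Finset.HasAntidiagonal (antidiagonal)

section Sums

variable {M : Type*} [AddCommMonoid M]

lemma finsum_comp_add_right {g : ℕ → M} {b : ℕ} (hg : ∀ m < b, g m = 0) :
    ∑ᶠ k, g (k + b) = ∑ᶠ m, g m := by
  rw [← finsum_mem_range (add_left_injective b), ← finsum_mem_univ g]
  refine finsum_mem_inter_support_eq' _ _ _ fun m hm ↦ ?_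
  have hbm : b ≤ m := not_lt.mp fun h ↦ hm (hg m h)
  simpa using ⟨m - b, Nat.sub_add_cancel hbm⟩

lemma sum_antidiagonal_fst_tsub_nsmul (f : ℕ → ℕ → M) (a b : ℕ) :
    ∑ p ∈ antidiagonal (a + b), (p.1 - b) • f p.1 p.2 =
      ∑ p ∈ antidiagonal a, p.1 • f (p.1 + b) p.2 := by
  symm
  refine Finset.sum_of_injOn (fun p ↦ (p.1 + b, p.2)) ?_ ?_ ?_ ?_
  · rintro ⟨k, l⟩ - ⟨k', l'⟩ - h
    simpa using h
  · rintro ⟨k, l⟩ h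
    simp only [Finset.mem_coe, Finset.HasAntidiagonal.mem_antidiagonal] at h ⊢
    omega
  · rintro ⟨k, l⟩ h hkl
    have hkb : k < b := by
      by_contra! hbk
      refine hkl ⟨(k - b, l), ?_, by simp [hbk]⟩
      simp only [Finset.mem_coe, Finset.HasAntidiagonal.mem_antidiagonal] at h ⊢
      omega
    simp [Nat.sub_eq_zero_of_le hkb.le]
  · simp

lemma sum_antidiagonal_snd_tsub_nsmul (f : ℕ → ℕ → M) (a b : ℕ) :
    ∑ p ∈ antidiagonal (a + b), (p.2 - b) • f p.1 p.2 =
      ∑ p ∈ antidiagonal a, p.2 • f p.1 (p.2 + b) := by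
  rw [← Finset.Nat.sum_antidiagonal_swap, ← Finset.Nat.sum_antidiagonal_swap (n := a)]
  exact sum_antidiagonal_fst_tsub_nsmul (fun k l ↦ f l k) a b

end Sums

lemma mul_lie_eq {A : Type*} [Ring A] (x y z : A) : ⁅x * y, z⁆ = x * ⁅y, z⁆ + ⁅x, z⁆ * y := by
  simp only [Ring.lie_def]
  noncomm_ring

section Derivations

variable {σ R : Type*}

lemma derivation_eq_sum_vars [CommSemiring R]
    (D : Derivation R (MvPolynomial σ R) (MvPolynomial σ R)) (f : MvPolynomial σ R) :
    D f = ∑ i ∈ f.vars, D (X i) * pderiv i f := by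
  classical
  have sum_apply (g : MvPolynomial σ R) :
      (∑ i ∈ f.vars, D (X i) • pderiv (R := R) i) g = ∑ i ∈ f.vars, D (X i) * pderiv i g := by
    simpa only [Derivation.coeFnAddMonoidHom_apply, Finset.sum_apply, Derivation.smul_apply,
      smul_eq_mul] using congrFun
      (map_sum Derivation.coeFnAddMonoidHom (fun i ↦ D (X i) • pderiv (R := R) i) f.vars) g
  rw [← sum_apply]
  refine derivation_eq_of_forall_mem_vars fun j hj ↦ ?_
  simp [sum_apply, pderiv_X, Pi.single_apply, hj]

lemma derivation_eq_finsum [CommSemiring R]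
    (D : Derivation R (MvPolynomial σ R) (MvPolynomial σ R)) (f : MvPolynomial σ R) :
    D f = ∑ᶠ i, D (X i) * pderiv i f := by
  rw [derivation_eq_sum_vars, finsum_eq_sum_of_support_subset]
  intro i hi
  contrapose! hi
  simp [pderiv_eq_zero_of_notMem_vars hi]

lemma lie_pderiv_pderiv [CommRing R] (i j : σ) :
    ⁅pderiv (R := R) i, pderiv (R := R) j⁆ = 0 := by
  classical
  refine derivation_ext fun m ↦ ?_
  rw [Derivation.commutator_apply, pderiv_X, pderiv_X, Pi.single_apply, Pi.single_apply]
  split_ifs <;> simp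

end Derivations

section Virasoro

attribute [local instance] LieRing.ofAssociativeRing

variable (R : Type*) [CommRing R]

/-- The operator `∂/∂t_k`. It is set to zero for even `k`, where there is no variable `t_k`, so that
sums over odd indices can be taken over all natural numbers. -/
def oddPderiv (k : ℕ) : Derivation R (MvPolynomial ℕ R) (MvPolynomial ℕ R) :=
  if Odd k then pderiv k else 0

/-- The operator `∂²/∂t_k∂t_l`, zero unless both indices are odd. -/
def mixedOddPderiv (k l : ℕ) : Module.End R (MvPolynomial ℕ R) :=
  (oddPderiv R k).toLinearMap * (oddPderiv R l).toLinearMap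

/-- The second-order operator `∑_{k+l=a} ∂²/∂t_k∂t_l` over pairs of odd indices. -/
def secondOrderPart (a : ℕ) : Module.End R (MvPolynomial ℕ R) :=
  ∑ p ∈ antidiagonal a, mixedOddPderiv R p.1 p.2

/-- The first-order operator `∑_{k odd} k t_k ∂/∂t_{k+b}` (for even `b`), encoded by its values
`t_m ↦ (m - b) t_{m-b}`; truncated subtraction makes the coefficient vanish for `m ≤ b`. -/
def firstOrderPart (b : ℕ) : Derivation R (MvPolynomial ℕ R) (MvPolynomial ℕ R) :=
  mkDerivation R fun m ↦ if Odd m then (m - b) • X (m - b) else 0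

/-- The multiple `4n V_j` of the Virasoro operator, as a function of `a = 2nj`. -/
def unnormalizedVirasoro (a : ℕ) : Module.End R (MvPolynomial ℕ R) :=
  secondOrderPart R a + 2 • (firstOrderPart R a).toLinearMap

/-- The Virasoro operator `V_j` over a commutative ring in which `4n` is invertible. -/
def virasoroOp (n j : ℕ) [Invertible (4 * n : R)] : Module.End R (MvPolynomial ℕ R) :=
  ⅟(4 * n : R) • unnormalizedVirasoro R (2 * n * j)

variable {R}

lemma firstOrderPart_X (b m : ℕ) : firstOrderPart R b (X m) =
    if Odd m then (m - b) • (X (m - b) : MvPolynomial ℕ R) else 0 :=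
  mkDerivation_X R _ m

lemma oddPderiv_X (k m : ℕ) :
    oddPderiv R k (X m : MvPolynomial ℕ R) = if Odd k ∧ m = k then 1 else 0 := by
  by_cases hk : Odd k <;> simp [oddPderiv, hk, pderiv_X, Pi.single_apply, eq_comm]

lemma firstOrderPart_apply {b : ℕ} (hb : Even b) (f : MvPolynomial ℕ R) :
    firstOrderPart R b f = ∑ᶠ k, if Odd k then k • (X k * pderiv (k + b) f) else 0 := by
  rw [derivation_eq_finsum, ← finsum_comp_add_right (b := b)]
  · refine finsum_congr fun k ↦ ?_
    have hodd : Odd (k + b) ↔ Odd k := by simp [Nat.odd_add, hb]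
    simp [firstOrderPart_X, hodd, mul_assoc]
  · intro m hm
    simp [firstOrderPart_X, Nat.sub_eq_zero_of_le hm.le]

lemma mixedOddPderiv_apply {k l : ℕ} (hkl : Even (k + l)) (f : MvPolynomial ℕ R) :
    mixedOddPderiv R k l f = if Odd k then pderiv k (pderiv l f) else 0 := by
  have hodd : Odd l ↔ Odd k := (Nat.even_add'.mp hkl).symm
  by_cases hk : Odd k <;> simp [mixedOddPderiv, oddPderiv, hodd, hk]

lemma secondOrderPart_apply {a : ℕ} (ha : Even a) (f : MvPolynomial ℕ R) :
    secondOrderPart R a f =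
      ∑ k ∈ Finset.range a, if Odd k then pderiv k (pderiv (a - k) f) else 0 := by
  have hlast : ¬ Odd a := by simpa using ha
  rw [secondOrderPart, LinearMap.sum_apply]
  calc _ = ∑ p ∈ antidiagonal a, if Odd p.1 then pderiv p.1 (pderiv p.2 f) else 0 :=
        Finset.sum_congr rfl fun p hp ↦
          mixedOddPderiv_apply (by rwa [Finset.HasAntidiagonal.mem_antidiagonal.mp hp]) f
    _ = _ := by
        rw [Finset.Nat.sum_antidiagonal_eq_sum_range_succ_mk, Finset.sum_range_succ]
        simp [hlast]

lemma lie_oddPderiv_oddPderiv (k l : ℕ) : ⁅oddPderiv R k, oddPderiv R l⁆ = 0 := by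
  by_cases h : Odd k ∧ Odd l
  · simpa only [oddPderiv, h, if_true] using lie_pderiv_pderiv k l
  · ext m
    rcases not_and_or.mp h with hk | hl
    · simp [Derivation.commutator_apply, oddPderiv, hk]
    · simp [Derivation.commutator_apply, oddPderiv, hl]

lemma lie_oddPderiv_firstOrderPart (k : ℕ) {b : ℕ} (hb : Even b) :
    ⁅oddPderiv R k, firstOrderPart R b⁆ = k • oddPderiv R (k + b) := by
  have hodd : Odd (k + b) ↔ Odd k := by simp [Nat.odd_add, hb]
  refine derivation_ext fun m ↦ ?_
  have hzero : firstOrderPart R b (oddPderiv R k (X m)) = 0 := by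
    rw [oddPderiv_X]; split_ifs <;> simp
  rw [Derivation.commutator_apply, hzero, sub_zero, Derivation.smul_apply, firstOrderPart_X,
    oddPderiv_X]
  by_cases hm : m = k + b
  · subst hm
    by_cases hk : Odd k <;> simp [hodd, oddPderiv_X, hk]
  · by_cases hk : Odd k ∧ m - b = k
    · have := hk.1.pos
      omega
    · rw [if_neg (fun h : Odd (k + b) ∧ _ ↦ hm h.2)]
      split_ifs <;> simp [oddPderiv_X, hk]

lemma firstOrderPart_firstOrderPart_X (a : ℕ) {b : ℕ} (hb : Even b) (m : ℕ) :
    firstOrderPart R a (firstOrderPart R b (X m)) =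
      if Odd m then ((m - b) * (m - (a + b))) • (X (m - (a + b)) : MvPolynomial ℕ R) else 0 := by
  rcases le_or_gt m b with hmb | hbm
  · simp [firstOrderPart_X, Nat.sub_eq_zero_of_le hmb]
  · have hodd : Odd (m - b) ↔ Odd m := by simp [Nat.odd_sub hbm.le, hb]
    by_cases hm : Odd m <;>
      simp [firstOrderPart_X, hodd, hm, Nat.sub_sub, add_comm b a, mul_assoc]

lemma lie_firstOrderPart_firstOrderPart {a b : ℕ} (ha : Even a) (hb : Even b) :
    ⁅firstOrderPart R a, firstOrderPart R b⁆ = ((a : R) - b) • firstOrderPart R (a + b) := by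
  refine derivation_ext fun m ↦ ?_
  rw [Derivation.commutator_apply, Derivation.smul_apply, firstOrderPart_firstOrderPart_X a hb,
    firstOrderPart_firstOrderPart_X b ha, firstOrderPart_X, add_comm b a]
  split_ifs
  · rcases le_or_gt m (a + b) with h | h
    · simp [Nat.sub_eq_zero_of_le h]
    · simp only [← Nat.cast_smul_eq_nsmul R, Nat.cast_mul, Nat.cast_sub (show a ≤ m by omega),
        Nat.cast_sub (show b ≤ m by omega)]
      module
  · simp

lemma lie_mixedOddPderiv_firstOrderPart (k l : ℕ) {b : ℕ} (hb : Even b) :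
    ⁅mixedOddPderiv R k l, (firstOrderPart R b).toLinearMap⁆ =
      k • mixedOddPderiv R (k + b) l + l • mixedOddPderiv R k (l + b) := by
  have hlie (k : ℕ) : ⁅(oddPderiv R k).toLinearMap, (firstOrderPart R b).toLinearMap⁆ =
      k • (oddPderiv R (k + b)).toLinearMap :=
    congrArg Derivation.toLinearMap (lie_oddPderiv_firstOrderPart k hb)
  rw [mixedOddPderiv, mul_lie_eq, hlie, hlie, mul_smul_comm, smul_mul_assoc, add_comm]
  rfl

lemma commute_oddPderiv (k l : ℕ) :
    Commute (oddPderiv R k).toLinearMap (oddPderiv R l).toLinearMap :=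
  commute_iff_lie_eq.mpr (congrArg Derivation.toLinearMap (lie_oddPderiv_oddPderiv k l))

lemma commute_secondOrderPart (a b : ℕ) :
    Commute (secondOrderPart R a) (secondOrderPart R b) :=
  Commute.sum_left _ _ _ fun _ _ ↦ Commute.sum_right _ _ _ fun _ _ ↦
    .mul_left (.mul_right (commute_oddPderiv _ _) (commute_oddPderiv _ _))
      (.mul_right (commute_oddPderiv _ _) (commute_oddPderiv _ _))

lemma lie_secondOrderPart_firstOrderPart (a : ℕ) {b : ℕ} (hb : Even b) :
    ⁅secondOrderPart R a, (firstOrderPart R b).toLinearMap⁆ =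
      ∑ p ∈ antidiagonal (a + b), ((p.1 - b) + (p.2 - b)) • mixedOddPderiv R p.1 p.2 := by
  simp only [secondOrderPart, sum_lie, lie_mixedOddPderiv_firstOrderPart _ _ hb, add_smul,
    Finset.sum_add_distrib, sum_antidiagonal_fst_tsub_nsmul, sum_antidiagonal_snd_tsub_nsmul]

lemma lie_secondOrderPart_firstOrderPart_sub_swap {a b : ℕ} (ha : Even a) (hb : Even b) :
    ⁅secondOrderPart R a, (firstOrderPart R b).toLinearMap⁆ -
        ⁅secondOrderPart R b, (firstOrderPart R a).toLinearMap⁆ =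
      ((a : R) - b) • secondOrderPart R (a + b) := by
  rw [lie_secondOrderPart_firstOrderPart a hb, lie_secondOrderPart_firstOrderPart b ha,
    add_comm b a, ← Finset.sum_sub_distrib, secondOrderPart, Finset.smul_sum]
  refine Finset.sum_congr rfl fun ⟨k, l⟩ hkl ↦ ?_
  have hkl : k + l = a + b := Finset.HasAntidiagonal.mem_antidiagonal.mp hkl
  have hcoeff : (k - b) + (l - b) + b = (k - a) + (l - a) + a := by omega
  have hcoeffR : (((k - b) + (l - b) : ℕ) : R) + b = (((k - a) + (l - a) : ℕ) : R) + a := by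
    simpa using congrArg (Nat.cast (R := R)) hcoeff
  rw [← Nat.cast_smul_eq_nsmul R, ← Nat.cast_smul_eq_nsmul R, ← sub_smul]
  congr 1
  linear_combination hcoeffR

theorem lie_unnormalizedVirasoro {a b : ℕ} (ha : Even a) (hb : Even b) :
    ⁅unnormalizedVirasoro R a, unnormalizedVirasoro R b⁆ =
      (2 * ((a : R) - b)) • unnormalizedVirasoro R (a + b) := by
  have hSS := (commute_secondOrderPart (R := R) a b).lie_eq
  have hSD := lie_secondOrderPart_firstOrderPart_sub_swap (R := R) ha hb
  have hDD : ⁅(firstOrderPart R a).toLinearMap, (firstOrderPart R b).toLinearMap⁆ =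
      ((a : R) - b) • (firstOrderPart R (a + b)).toLinearMap :=
    congrArg Derivation.toLinearMap (lie_firstOrderPart_firstOrderPart ha hb)
  have hDS : ⁅(firstOrderPart R a).toLinearMap, secondOrderPart R b⁆ =
      -⁅secondOrderPart R b, (firstOrderPart R a).toLinearMap⁆ := (lie_skew _ _).symm
  simp only [unnormalizedVirasoro, add_lie, lie_add, nsmul_lie, lie_nsmul, hSS, hDS, hDD,
    eq_add_of_sub_eq hSD]
  module

theorem commutator_Vi_Vj_general (n : ℕ) [Invertible (4 * n : R)] (i j : ℕ) :
    ⁅virasoroOp R n i, virasoroOp R n j⁆ = ((i : R) - j) • virasoroOp R n (i + j) := by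
  have heven (j : ℕ) : Even (2 * n * j) := by simp [mul_assoc]
  have hscalar : ⅟(4 * n : R) * (2 * ((2 * n * i : ℕ) - (2 * n * j : ℕ))) = (i : R) - j := by
    rw [invOf_mul_eq_iff_eq_mul_left]
    push_cast
    ring
  calc ⁅virasoroOp R n i, virasoroOp R n j⁆
    _ = ⅟(4 * n : R) • ⅟(4 * n : R) •
          ⁅unnormalizedVirasoro R (2 * n * i), unnormalizedVirasoro R (2 * n * j)⁆ := by
        rw [virasoroOp, virasoroOp, smul_lie (L := Module.End R (MvPolynomial ℕ R)),
          lie_smul (L := Module.End R (MvPolynomial ℕ R)) (M := Module.End R (MvPolynomial ℕ R))]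
    _ = ⅟(4 * n : R) • ((i : R) - j) • unnormalizedVirasoro R (2 * n * (i + j)) := by
        rw [lie_unnormalizedVirasoro (heven i) (heven j), smul_smul _ (2 * _), hscalar,
          mul_add]
    _ = ((i : R) - j) • virasoroOp R n (i + j) := smul_comm _ _ _

end Virasoro

lemma Vop_eq_virasoroOp (n j : ℕ) [Invertible (4 * n : ℚ)] (f : MvPolynomial ℕ ℚ) :
    Vop n j f = virasoroOp ℚ n j f := by
  have heven : Even (2 * n * j) := by simp [mul_assoc]
  have hscalar : (1 / (2 * n) : ℚ) = ⅟(4 * n : ℚ) * 2 := by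
    rw [invOf_eq_inv]
    ring
  simp only [Vop, virasoroOp, unnormalizedVirasoro, LinearMap.smul_apply, LinearMap.add_apply,
    secondOrderPart_apply heven, Derivation.coeFn_coe, firstOrderPart_apply heven, smul_add,
    hscalar, Nat.cast_smul_eq_nsmul, one_div, invOf_eq_inv]
  module

/-- For `n ≥ 1` the operators `V_j` satisfy
`[V_i, V_j] = (i - j) V_{i+j}` for all `i, j ≥ 1`. -/
theorem commutator_Vi_Vj (n : ℕ) (hn : 1 ≤ n) (i j : ℕ) (hi : 1 ≤ i) (hj : 1 ≤ j) :
    (fun f => Vop n i (Vop n j f) - Vop n j (Vop n i f))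
      = fun f : MvPolynomial ℕ ℚ => ((i : ℚ) - (j : ℚ)) • Vop n (i + j) f := by
  funext f
  have : Invertible (4 * n : ℚ) := invertibleOfNonzero (by positivity)
  simp only [Vop_eq_virasoroOp]
  exact LinearMap.congr_fun (commutator_Vi_Vj_general n i j) f
end
end

section
/- Let L be a pseudo-differential operator of the form D + Σ_{i≥1} v_i D^{-i} with L* = -L, and suppose (L^{2n})_- = 0 for some n ≥ 1. Define A_{1,l} = M L^l + L^l M for any operator M with [L,M]=1 and M*=M. Then for j ≥ -1, the negative part of [A_{1,2nj+1}, L^{2n}] vanishes; equivalently, [-(A_{1,2nj+1})_-, L^{2n}]_- = 4n (L^{2n(j+1)})_- = 0. -/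
/-!
Pseudo-differential operators over a commutative differential ring `(A, d)` are
modelled by their coefficient functions `a : ℤ → A` (the coefficient of `D^i`),
with support bounded above.  The product is
`f D^i · g D^j = ∑_{r ≥ 0} C(i,r) f D^r(g) D^{i+j-r}` and the adjoint is
`(f D^i)* = (-D)^i f`.
-/

noncomputable section

open scoped BigOperators

/-- The generalized binomial coefficient `C(i, r)` for an integer `i`
(the division is exact). -/
def genChoose (i : ℤ) (r : ℕ) : ℤ :=
  (∏ s ∈ Finset.range r, (i - (s : ℤ))) / (r.factorial : ℤ)

variable {A : Type*} [CommRing A]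

/-- Coefficient function of the product of two pseudo-differential operators:
`(f D^i) · (g D^j) = ∑_{r ≥ 0} C(i,r) f D^r(g) D^{i+j-r}`. -/
def pdoMul (d : A → A) (a b : ℤ → A) : ℤ → A :=
  fun k => ∑ᶠ (i : ℤ), ∑ᶠ (r : ℕ),
    ((genChoose i r : ℤ) : A) * a i * d^[r] (b (k - i + r))

/-- Coefficient function of the adjoint `A* = ∑_i (-D)^i f_i`. -/
def pdoAdj (d : A → A) (a : ℤ → A) : ℤ → A :=
  fun k => ∑ᶠ (i : ℤ),
    if k ≤ i then
      ((-1 : A) ^ i.natAbs) * ((genChoose i (i - k).toNat : ℤ) : A)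
        * d^[(i - k).toNat] (a i)
    else 0

/-- A pseudo-differential operator has coefficients supported in degrees `≤ N`. -/
def pdoBdd (a : ℤ → A) : Prop := ∃ N : ℤ, ∀ i : ℤ, N < i → a i = 0

/-- The identity pseudo-differential operator. -/
def pdoOne : ℤ → A := fun k => if k = 0 then 1 else 0

/-- Powers of a pseudo-differential operator. -/
def pdoPow (d : A → A) (a : ℤ → A) : ℕ → (ℤ → A)
  | 0 => pdoOne
  | n + 1 => pdoMul d a (pdoPow d a n)

/-- Integer powers, given an inverse `ai` of `a`. -/
def pdoZpow (d : A → A) (a ai : ℤ → A) (m : ℤ) : ℤ → A :=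
  if 0 ≤ m then pdoPow d a m.toNat else pdoPow d ai (-m).toNat

/-- The negative part `A_- = ∑_{i<0} f_i D^i`. -/
def pdoNegPart (a : ℤ → A) : ℤ → A := fun k => if k < 0 then a k else 0

/-!
In the associative ring of pseudo-differential operators, `[L, M] = 1` gives
`[L^m, M] = m L^{m-1}` for every integer `m`, and hence `[A_{1,l}, L^m] = -2m L^{l+m-1}`.
Replacing `A_{1,l}` by `(A_{1,l})_-` in the commutator with the differential operator `L^{2n}`
changes it only by a commutator of differential operators, which has no negative part.
Finally `L^{2n(j+1)} = (L^{2n})^{j+1}` is a differential operator as soon as `j ≥ -1`.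

Associativity comes down to one coefficient at a time of a product of three monomials, where it
is the Chu–Vandermonde identity combined with the Leibniz rule for `D^r`. Boundedness from above
of the coefficients makes all the sums involved finite.
-/

open Finset hiding antidiagonal mem_antidiagonal
open Finset.HasAntidiagonal (antidiagonal mem_antidiagonal)

theorem genChoose_eq_choose (i : ℤ) (r : ℕ) : genChoose i r = Ring.choose i r := by
  have h := Ring.descPochhammer_eq_factorial_smul_choose i r
  rw [← Polynomial.eval_eq_smeval, descPochhammer_eval_eq_prod_range, nsmul_eq_mul] at h
  rw [genChoose, h, Int.mul_ediv_cancel_left _ (mod_cast r.factorial_ne_zero)]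

theorem sum_antidiagonal_antidiagonal_assoc {B : Type*} [AddCommMonoid B]
    (f : ℕ → ℕ → ℕ → B) (n : ℕ) :
    ∑ p ∈ antidiagonal n, ∑ q ∈ antidiagonal p.2, f p.1 q.1 q.2
      = ∑ p ∈ antidiagonal n, ∑ q ∈ antidiagonal p.1, f q.1 q.2 p.2 := by
  rw [sum_sigma', sum_sigma']
  refine sum_nbij' (fun s => ⟨(s.1.1 + s.2.1, s.2.2), (s.1.1, s.2.1)⟩)
    (fun s => ⟨(s.2.1, s.2.2 + s.1.2), (s.2.2, s.1.2)⟩) ?_ ?_ ?_ ?_ ?_ <;>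
  · rintro ⟨⟨a, b⟩, ⟨c, e⟩⟩ h
    simp only [mem_sigma, mem_antidiagonal] at h
    obtain ⟨rfl, rfl⟩ := h
    simp [add_assoc]

theorem finsum_eq_sum_antidiagonal {B : Type*} [AddCommMonoid B] {f : ℤ → B} {a : ℤ} {n : ℕ}
    (hf : Function.support f ⊆ Set.Icc a (a + n)) :
    ∑ᶠ m, f m = ∑ p ∈ antidiagonal n, f (a + p.1) := by
  rw [finsum_eq_sum_of_support_subset (s := Icc a (a + n)) f (by simpa using hf)]
  refine sum_nbij' (fun m => ((m - a).toNat, (a + n - m).toNat)) (fun p => a + p.1) ?_ ?_ ?_ ?_ ?_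
  · intro m hm; simp only [mem_Icc, mem_antidiagonal] at hm ⊢; lia
  · intro m hm; simp only [mem_Icc, mem_antidiagonal] at hm ⊢; lia
  · intro m hm; simp only [mem_Icc] at hm; lia
  · intro p hp; simp only [mem_antidiagonal] at hp; exact Prod.ext (by lia) (by lia)
  · intro m hm; simp only [mem_Icc] at hm; congr; lia

theorem iterate_derivation_mul {R B : Type*} [CommSemiring R] [CommSemiring B] [Algebra R B]
    (d : Derivation R B B) (n : ℕ) (x y : B) :
    d^[n] (x * y) = ∑ p ∈ antidiagonal n, n.choose p.1 • (d^[p.1] x * d^[p.2] y) := by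
  induction n with
  | zero => simp
  | succ n ih =>
    rw [sum_antidiagonal_choose_succ_nsmul (fun i j => d^[i] x * d^[j] y)]
    simp only [Function.iterate_succ_apply', ih, map_sum, map_nsmul, Derivation.leibniz,
      smul_eq_mul, smul_add, sum_add_distrib]
    congr 1
    refine sum_congr rfl fun p hp => ?_
    rw [n.choose_symm_of_eq_add (mem_antidiagonal.1 hp).symm, mul_comm]

theorem iterate_derivation_one {R B : Type*} [CommSemiring R] [CommSemiring B] [Algebra R B]
    (d : Derivation R B B) {n : ℕ} (hn : n ≠ 0) : d^[n] 1 = 0 := by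
  obtain ⟨m, rfl⟩ := Nat.exists_eq_succ_of_ne_zero hn
  rw [Function.iterate_succ_apply]
  simp [iterate_map_zero]

section Product

variable (d : Derivation ℤ A A)

/-- The coefficient of `D^k` in `(x D^i) (y D^j)`, as a bilinear map in `x` and `y`. -/
def monomialMulCoeff (k i j : ℤ) : A →ₗ[ℤ] A →ₗ[ℤ] A :=
  if k ≤ i + j then
    Ring.choose i (i + j - k).toNat •
      (LinearMap.mul ℤ A).compl₂ ((d : A →ₗ[ℤ] A) ^ (i + j - k).toNat)
  else 0

variable {d} {k i j : ℤ}

theorem monomialMulCoeff_apply {r : ℕ} (h : i + j = k + r) (x y : A) :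
    monomialMulCoeff d k i j x y = Ring.choose i r • (x * d^[r] y) := by
  obtain rfl : i = k + r - j := by lia
  simp [monomialMulCoeff, Module.End.pow_apply]

theorem monomialMulCoeff_of_lt (h : i + j < k) : monomialMulCoeff d k i j = 0 :=
  if_neg (by lia)

theorem monomialMulCoeff_of_nonneg_of_lt (hi : 0 ≤ i) (hj : k < j) :
    monomialMulCoeff d k i j = 0 := by
  obtain ⟨n, rfl⟩ := Int.eq_ofNat_of_zero_le hi
  ext x y
  rcases lt_or_ge (n + j) k with h | h
  · rw [monomialMulCoeff_of_lt h]
  · obtain ⟨r, hr⟩ := Int.le.dest h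
    rw [monomialMulCoeff_apply hr.symm, Ring.choose_natCast,
      Nat.choose_eq_zero_of_lt (by lia), Nat.cast_zero, zero_smul]
    rfl

theorem monomialMulCoeff_zero_left (h : j ≠ k) (x y : A) : monomialMulCoeff d k 0 j x y = 0 := by
  rcases lt_or_gt_of_ne h with h | h
  · rw [monomialMulCoeff_of_lt (by lia)]
    rfl
  · rw [monomialMulCoeff_of_nonneg_of_lt le_rfl h]
    rfl

theorem monomialMulCoeff_one_right (h : i ≠ k) (x : A) : monomialMulCoeff d k i 0 x 1 = 0 := by
  rcases lt_or_gt_of_ne h with h | h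
  · rw [monomialMulCoeff_of_lt (by lia)]
    rfl
  · obtain ⟨r, rfl⟩ := Int.le.dest h.le
    rw [monomialMulCoeff_apply (r := r) (by lia), iterate_derivation_one d (by lia),
      mul_zero, smul_zero]

theorem sum_antidiagonal_choose_smul_iterate_assoc (i j : ℤ) (n : ℕ) (x y z : A) :
    ∑ p ∈ antidiagonal n, Ring.choose (i + j - p.1) p.2 •
        ((Ring.choose i p.1 • (x * d^[p.1] y)) * d^[p.2] z)
      = ∑ p ∈ antidiagonal n, Ring.choose i p.1 •
        (x * d^[p.1] (Ring.choose j p.2 • (y * d^[p.2] z))) := by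
  have vandermonde (p : ℕ × ℕ) : Ring.choose (i + j - p.1) p.2
      = ∑ q ∈ antidiagonal p.2, Ring.choose (i - p.1) q.1 * Ring.choose j q.2 := by
    rw [← Ring.add_choose_eq p.2 (Commute.all _ _), sub_add_eq_add_sub]
  have leibniz (p : ℕ × ℕ) : d^[p.1] (Ring.choose j p.2 • (y * d^[p.2] z))
      = Ring.choose j p.2 • ∑ q ∈ antidiagonal p.1,
        p.1.choose q.1 • (d^[q.1] y * d^[q.2 + p.2] z) := by
    simp only [← Module.End.pow_apply, ← Derivation.coeFn_coe, map_zsmul]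
    simp only [Module.End.pow_apply, Derivation.coeFn_coe, iterate_derivation_mul,
      Function.iterate_add_apply]
  have choose_mul (a b : ℕ) : Ring.choose i a * Ring.choose (i - a) b
      = (a + b).choose a * Ring.choose i (a + b) := by
    rw [← nsmul_eq_mul, Ring.choose_smul_choose i (Nat.le_add_right a b), Nat.add_sub_cancel_left]
  calc
    _ = ∑ p ∈ antidiagonal n, ∑ q ∈ antidiagonal p.2,
        (Ring.choose i p.1 * Ring.choose (i - p.1) q.1 * Ring.choose j q.2) •
          (x * d^[p.1] y * d^[q.1 + q.2] z) := by
      refine sum_congr rfl fun p _ => ?_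
      rw [vandermonde, sum_smul]
      refine sum_congr rfl fun q hq => ?_
      rw [mem_antidiagonal.1 hq]
      simp only [zsmul_eq_mul]
      push_cast
      ring
    _ = ∑ p ∈ antidiagonal n, ∑ q ∈ antidiagonal p.1,
        (Ring.choose i q.1 * Ring.choose (i - q.1) q.2 * Ring.choose j p.2) •
          (x * d^[q.1] y * d^[q.2 + p.2] z) :=
      sum_antidiagonal_antidiagonal_assoc (fun a b c =>
        (Ring.choose i a * Ring.choose (i - a) b * Ring.choose j c) •
          (x * d^[a] y * d^[b + c] z)) n
    _ = _ := by
      refine sum_congr rfl fun p _ => ?_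
      rw [leibniz, smul_sum, mul_sum, smul_sum]
      refine sum_congr rfl fun q hq => ?_
      rw [choose_mul, mem_antidiagonal.1 hq]
      simp only [zsmul_eq_mul, nsmul_eq_mul]
      push_cast
      ring

theorem support_monomialMulCoeff_left_subset (k i j l : ℤ) (x y z : A) :
    (Function.support fun m => monomialMulCoeff d k m l (monomialMulCoeff d m i j x y) z)
      ⊆ Set.Icc (k - l) (i + j) := by
  refine fun m hm => ⟨?_, ?_⟩ <;> contrapose! hm
  · simp [monomialMulCoeff_of_lt (show m + l < k by lia)]
  · simp [monomialMulCoeff_of_lt hm]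

theorem support_monomialMulCoeff_right_subset (k i j l : ℤ) (x y z : A) :
    (Function.support fun m => monomialMulCoeff d k i m x (monomialMulCoeff d m j l y z))
      ⊆ Set.Icc (k - i) (j + l) := by
  refine fun m hm => ⟨?_, ?_⟩ <;> contrapose! hm
  · simp [monomialMulCoeff_of_lt (show i + m < k by lia)]
  · simp [monomialMulCoeff_of_lt hm]

theorem finsum_antidiagonal_choose_smul_iterate_assoc (k i j l : ℤ) (x y z : A) :
    ∑ᶠ m, monomialMulCoeff d k m l (monomialMulCoeff d m i j x y) z
      = ∑ᶠ m, monomialMulCoeff d k i m x (monomialMulCoeff d m j l y z) := by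
  have hleft := support_monomialMulCoeff_left_subset (d := d) k i j l x y z
  have hright := support_monomialMulCoeff_right_subset (d := d) k i j l x y z
  rcases lt_or_ge (i + j + l) k with h | h
  · rw [Set.Icc_eq_empty (by lia), Set.subset_empty_iff, Function.support_eq_empty_iff]
      at hleft hright
    rw [hleft, hright]
  · obtain ⟨n, hn⟩ := Int.le.dest h
    rw [show i + j = k - l + n by lia] at hleft
    rw [show j + l = k - i + n by lia] at hright
    calc
      _ = ∑ p ∈ antidiagonal n, monomialMulCoeff d k (k - l + p.2) l
          (monomialMulCoeff d (k - l + p.2) i j x y) z := by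
        rw [finsum_eq_sum_antidiagonal hleft, ← Nat.sum_antidiagonal_swap]
        rfl
      _ = ∑ p ∈ antidiagonal n, Ring.choose (i + j - p.1) p.2 •
          ((Ring.choose i p.1 • (x * d^[p.1] y)) * d^[p.2] z) := by
        refine sum_congr rfl fun p hp => ?_
        rw [mem_antidiagonal] at hp
        rw [monomialMulCoeff_apply (r := p.2) (by lia), monomialMulCoeff_apply (r := p.1) (by lia),
          show k - l + p.2 = i + j - p.1 by lia]
      _ = ∑ p ∈ antidiagonal n, Ring.choose i p.1 •
          (x * d^[p.1] (Ring.choose j p.2 • (y * d^[p.2] z))) :=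
        sum_antidiagonal_choose_smul_iterate_assoc i j n x y z
      _ = ∑ p ∈ antidiagonal n, monomialMulCoeff d k i (k - i + p.1) x
          (monomialMulCoeff d (k - i + p.1) j l y z) := by
        refine sum_congr rfl fun p hp => ?_
        rw [mem_antidiagonal] at hp
        rw [monomialMulCoeff_apply (r := p.1) (by lia), monomialMulCoeff_apply (r := p.2) (by lia)]
      _ = _ := (finsum_eq_sum_antidiagonal hright).symm

theorem sum_monomialMulCoeff_assoc {k i j l : ℤ} {U V : Finset ℤ}
    (hU : Icc (k - l) (i + j) ⊆ U) (hV : Icc (k - i) (j + l) ⊆ V) (x y z : A) :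
    ∑ m ∈ U, monomialMulCoeff d k m l (monomialMulCoeff d m i j x y) z
      = ∑ m ∈ V, monomialMulCoeff d k i m x (monomialMulCoeff d m j l y z) := by
  rw [← coe_subset, coe_Icc] at hU hV
  rw [← finsum_eq_sum_of_support_subset _
      ((support_monomialMulCoeff_left_subset k i j l x y z).trans hU),
    ← finsum_eq_sum_of_support_subset _
      ((support_monomialMulCoeff_right_subset k i j l x y z).trans hV),
    finsum_antidiagonal_choose_smul_iterate_assoc]

theorem pdoMul_eq_finsum_monomialMulCoeff (a b : ℤ → A) (k : ℤ) :
    pdoMul d a b k = ∑ᶠ i, ∑ᶠ j, monomialMulCoeff d k i j (a i) (b j) := by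
  refine finsum_congr fun i => ?_
  set f : ℤ → A := fun j => monomialMulCoeff d k i j (a i) (b j)
  have hrange : Function.support f ⊆ Set.range fun r : ℕ => k - i + (r : ℤ) := by
    intro j hj
    have hle : k - i ≤ j := by
      contrapose! hj
      simp [f, monomialMulCoeff_of_lt (show i + j < k by lia)]
    exact Int.le.dest hle
  calc
    _ = ∑ᶠ r : ℕ, f (k - i + r) := finsum_congr fun r => by
      simp only [f]
      rw [monomialMulCoeff_apply (r := r) (by lia), genChoose_eq_choose, zsmul_eq_mul, mul_assoc]
    _ = ∑ᶠ j ∈ Set.range fun r : ℕ => k - i + (r : ℤ), f j :=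
      (finsum_mem_range fun r s h => by simpa using h).symm
    _ = ∑ᶠ j, f j := by
      rw [finsum_mem_def, Set.indicator_eq_self.2 hrange]

variable {a b c : ℤ → A} {Na Nb : ℤ}

theorem pdoMul_eq_sum (ha : ∀ i, Na < i → a i = 0) (hb : ∀ i, Nb < i → b i = 0) {S T : Finset ℤ}
    (hS : Icc (k - Nb) Na ⊆ S) (hT : Icc (k - Na) Nb ⊆ T) :
    pdoMul d a b k = ∑ i ∈ S, ∑ j ∈ T, monomialMulCoeff d k i j (a i) (b j) := by
  have hterm (i j : ℤ) (h : monomialMulCoeff d k i j (a i) (b j) ≠ 0) :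
      k ≤ i + j ∧ i ≤ Na ∧ j ≤ Nb := by
    refine ⟨?_, ?_, ?_⟩ <;> contrapose! h
    · simp [monomialMulCoeff_of_lt h]
    · simp [ha i h]
    · simp [hb j h]
  have hinner (i : ℤ) : ∑ᶠ j, monomialMulCoeff d k i j (a i) (b j)
      = ∑ j ∈ T, monomialMulCoeff d k i j (a i) (b j) :=
    finsum_eq_sum_of_support_subset _ fun j hj => hT (mem_Icc.2 (by have := hterm i j hj; lia))
  simp only [pdoMul_eq_finsum_monomialMulCoeff, hinner]
  refine finsum_eq_sum_of_support_subset _ fun i hi => hS ?_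
  obtain ⟨j, -, hj⟩ := exists_ne_zero_of_sum_ne_zero hi
  exact mem_Icc.2 (by have := hterm i j hj; lia)

theorem pdoMul_eq_zero_of_lt (ha : ∀ i, Na < i → a i = 0) (hb : ∀ i, Nb < i → b i = 0)
    (hk : Na + Nb < k) : pdoMul d a b k = 0 := by
  rw [pdoMul_eq_sum ha hb subset_rfl subset_rfl, Icc_eq_empty (by lia), sum_empty]

theorem pdoBdd_pdoMul (ha : pdoBdd a) (hb : pdoBdd b) : pdoBdd (pdoMul d a b) := by
  obtain ⟨Na, ha⟩ := ha
  obtain ⟨Nb, hb⟩ := hb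
  exact ⟨Na + Nb, fun _ => pdoMul_eq_zero_of_lt ha hb⟩

theorem exists_common_bound_of_pdoBdd (ha : pdoBdd a) (hb : pdoBdd b) :
    ∃ N : ℤ, (∀ i, N < i → a i = 0) ∧ ∀ i, N < i → b i = 0 := by
  obtain ⟨Na, ha⟩ := ha
  obtain ⟨Nb, hb⟩ := hb
  exact ⟨max Na Nb, fun i hi => ha i (by lia), fun i hi => hb i (by lia)⟩

theorem pdoBdd_add (ha : pdoBdd a) (hb : pdoBdd b) : pdoBdd (a + b) := by
  obtain ⟨N, ha, hb⟩ := exists_common_bound_of_pdoBdd ha hb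
  exact ⟨N, fun i hi => by simp [ha i hi, hb i hi]⟩

theorem pdoBdd_pdoOne : pdoBdd (pdoOne : ℤ → A) :=
  ⟨0, fun _ hi => if_neg hi.ne'⟩

theorem pdoMul_assoc (ha : pdoBdd a) (hb : pdoBdd b) (hc : pdoBdd c) :
    pdoMul d (pdoMul d a b) c = pdoMul d a (pdoMul d b c) := by
  obtain ⟨Na, ha⟩ := ha
  obtain ⟨Nb, hb⟩ := hb
  obtain ⟨Nc, hc⟩ := hc
  funext k
  -- The degrees in `a`, `b`, `c`, `a * b` and `b * c` that can contribute to degree `k`.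
  let I := Icc (k - Nb - Nc) Na
  let J := Icc (k - Na - Nc) Nb
  let K := Icc (k - Na - Nb) Nc
  let U := Icc (k - Nc) (Na + Nb)
  let V := Icc (k - Na) (Nb + Nc)
  have hab (m : ℤ) (hm : m ∈ U) :
      pdoMul d a b m = ∑ i ∈ I, ∑ j ∈ J, monomialMulCoeff d m i j (a i) (b j) := by
    have := (mem_Icc.1 hm).1
    exact pdoMul_eq_sum ha hb (Icc_subset_Icc_left (by lia)) (Icc_subset_Icc_left (by lia))
  have hbc (m : ℤ) (hm : m ∈ V) :
      pdoMul d b c m = ∑ j ∈ J, ∑ l ∈ K, monomialMulCoeff d m j l (b j) (c l) := by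
    have := (mem_Icc.1 hm).1
    exact pdoMul_eq_sum hb hc (Icc_subset_Icc_left (by lia)) (Icc_subset_Icc_left (by lia))
  have hassoc (i : ℤ) (hi : i ∈ I) (j : ℤ) (hj : j ∈ J) (l : ℤ) (hl : l ∈ K) :
      ∑ m ∈ U, monomialMulCoeff d k m l (monomialMulCoeff d m i j (a i) (b j)) (c l)
        = ∑ m ∈ V, monomialMulCoeff d k i m (a i) (monomialMulCoeff d m j l (b j) (c l)) := by
    rw [mem_Icc] at hi hj hl
    refine sum_monomialMulCoeff_assoc (Icc_subset_Icc ?_ ?_) (Icc_subset_Icc ?_ ?_) _ _ _ <;>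
      lia
  calc pdoMul d (pdoMul d a b) c k
    _ = ∑ m ∈ U, ∑ l ∈ K, monomialMulCoeff d k m l (pdoMul d a b m) (c l) :=
      pdoMul_eq_sum (fun _ => pdoMul_eq_zero_of_lt ha hb) hc subset_rfl
        (Icc_subset_Icc_left (by lia))
    _ = ∑ m ∈ U, ∑ l ∈ K, ∑ i ∈ I, ∑ j ∈ J,
        monomialMulCoeff d k m l (monomialMulCoeff d m i j (a i) (b j)) (c l) :=
      sum_congr rfl fun m hm => by simp only [hab m hm, map_sum, LinearMap.sum_apply]
    _ = ∑ i ∈ I, ∑ j ∈ J, ∑ l ∈ K, ∑ m ∈ U,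
        monomialMulCoeff d k m l (monomialMulCoeff d m i j (a i) (b j)) (c l) := by
      simp only [sum_comm (s := U), sum_comm (s := K) (t := I), sum_comm (s := K) (t := J)]
    _ = ∑ i ∈ I, ∑ j ∈ J, ∑ l ∈ K, ∑ m ∈ V,
        monomialMulCoeff d k i m (a i) (monomialMulCoeff d m j l (b j) (c l)) :=
      sum_congr rfl fun i hi => sum_congr rfl fun j hj => sum_congr rfl fun l hl =>
        hassoc i hi j hj l hl
    _ = ∑ i ∈ I, ∑ m ∈ V, ∑ j ∈ J, ∑ l ∈ K,
        monomialMulCoeff d k i m (a i) (monomialMulCoeff d m j l (b j) (c l)) := by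
      simp only [sum_comm (s := V)]
    _ = ∑ i ∈ I, ∑ m ∈ V, monomialMulCoeff d k i m (a i) (pdoMul d b c m) :=
      sum_congr rfl fun i _ => sum_congr rfl fun m hm => by simp only [hbc m hm, map_sum]
    _ = pdoMul d a (pdoMul d b c) k :=
      (pdoMul_eq_sum ha (fun _ => pdoMul_eq_zero_of_lt hb hc) (Icc_subset_Icc_left (by lia))
        subset_rfl).symm

theorem pdoMul_add_left (ha : pdoBdd a) (hb : pdoBdd b) (hc : pdoBdd c) :
    pdoMul d (a + b) c = pdoMul d a c + pdoMul d b c := by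
  obtain ⟨N, hNa, hNb⟩ := exists_common_bound_of_pdoBdd ha hb
  obtain ⟨Nc, hc⟩ := hc
  have hNab (i : ℤ) (hi : N < i) : (a + b) i = 0 := by simp [hNa i hi, hNb i hi]
  funext k
  rw [Pi.add_apply, pdoMul_eq_sum hNab hc subset_rfl subset_rfl,
    pdoMul_eq_sum hNa hc subset_rfl subset_rfl, pdoMul_eq_sum hNb hc subset_rfl subset_rfl]
  simp only [Pi.add_apply, map_add, LinearMap.add_apply, sum_add_distrib]

theorem pdoMul_add_right (ha : pdoBdd a) (hb : pdoBdd b) (hc : pdoBdd c) :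
    pdoMul d a (b + c) = pdoMul d a b + pdoMul d a c := by
  obtain ⟨Na, ha⟩ := ha
  obtain ⟨N, hNb, hNc⟩ := exists_common_bound_of_pdoBdd hb hc
  have hNbc (i : ℤ) (hi : N < i) : (b + c) i = 0 := by simp [hNb i hi, hNc i hi]
  funext k
  rw [Pi.add_apply, pdoMul_eq_sum ha hNbc subset_rfl subset_rfl,
    pdoMul_eq_sum ha hNb subset_rfl subset_rfl, pdoMul_eq_sum ha hNc subset_rfl subset_rfl]
  simp only [Pi.add_apply, map_add, sum_add_distrib]

theorem pdoMul_pdoOne (a : ℤ → A) : pdoMul d a pdoOne = a := by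
  funext k
  have hinner (i : ℤ) : ∑ᶠ j, monomialMulCoeff d k i j (a i) (pdoOne j)
      = monomialMulCoeff d k i 0 (a i) 1 :=
    finsum_eq_single _ 0 fun j hj => by rw [pdoOne, if_neg hj, map_zero]
  simp only [pdoMul_eq_finsum_monomialMulCoeff, hinner]
  rw [finsum_eq_single _ k fun i hi => monomialMulCoeff_one_right hi _,
    monomialMulCoeff_apply (r := 0) (by simp)]
  simp

theorem pdoOne_pdoMul (a : ℤ → A) : pdoMul d pdoOne a = a := by
  funext k
  have houter (i : ℤ) (hi : i ≠ 0) :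
      ∑ᶠ j, monomialMulCoeff d k i j (pdoOne i) (a j) = 0 := by
    simp [pdoOne, if_neg hi]
  rw [pdoMul_eq_finsum_monomialMulCoeff, finsum_eq_single _ 0 houter,
    finsum_eq_single _ k fun j hj => monomialMulCoeff_zero_left hj _ _,
    monomialMulCoeff_apply (r := 0) (by simp)]
  simp [pdoOne]

theorem pdoNegPart_add (a b : ℤ → A) : pdoNegPart (a + b) = pdoNegPart a + pdoNegPart b := by
  funext k
  by_cases hk : k < 0 <;> simp [pdoNegPart, hk]

theorem pdoNegPart_eq_zero_iff : pdoNegPart a = 0 ↔ ∀ i < 0, a i = 0 := by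
  simp [funext_iff, pdoNegPart]

theorem pdoNegPart_pdoMul_eq_zero (ha : pdoNegPart a = 0) (hb : pdoNegPart b = 0) :
    pdoNegPart (pdoMul d a b) = 0 := by
  rw [pdoNegPart_eq_zero_iff] at *
  intro k hk
  have hterm (i j : ℤ) : monomialMulCoeff d k i j (a i) (b j) = 0 := by
    rcases lt_or_ge i 0 with hi | hi
    · simp [ha i hi]
    rcases lt_or_ge j 0 with hj | hj
    · simp [hb j hj]
    · simp [monomialMulCoeff_of_nonneg_of_lt hi (hk.trans_le hj)]
  simp [pdoMul_eq_finsum_monomialMulCoeff, hterm]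

end Product

section CanonicalPair

variable {R : Type*} [Ring R] (u : Rˣ) (M : R)

/-- The generator `A_{1,l} = M L^l + L^l M` of the additional symmetries, for an invertible `L`. -/
def additionalGenerator (l : ℤ) : R :=
  M * ((u ^ l : Rˣ) : R) + ((u ^ l : Rˣ) : R) * M

variable {u M}

theorem lie_zpow_eq_zsmul (h : ⁅(u : R), M⁆ = 1) (m : ℤ) :
    ⁅((u ^ m : Rˣ) : R), M⁆ = m • ((u ^ (m - 1) : Rˣ) : R) := by
  have hsucc (m : ℤ) : ⁅((u ^ (m + 1) : Rˣ) : R), M⁆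
      = ⁅((u ^ m : Rˣ) : R), M⁆ * u + ((u ^ m : Rˣ) : R) := by
    calc ⁅((u ^ (m + 1) : Rˣ) : R), M⁆
      _ = ⁅((u ^ m : Rˣ) : R), M⁆ * u + ((u ^ m : Rˣ) : R) * ⁅(u : R), M⁆ := by
        simp only [zpow_add_one, Units.val_mul, Ring.lie_def]
        noncomm_ring
      _ = _ := by rw [h, mul_one]
  have hshift (m : ℤ) : ((u ^ (m - 1) : Rˣ) : R) * u = ((u ^ m : Rˣ) : R) := by
    rw [← Units.val_mul, zpow_sub_one, inv_mul_cancel_right]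
  have hsucc_iff (m : ℤ) : ⁅((u ^ (m + 1) : Rˣ) : R), M⁆ = (m + 1) • ((u ^ m : Rˣ) : R)
      ↔ ⁅((u ^ m : Rˣ) : R), M⁆ = m • ((u ^ (m - 1) : Rˣ) : R) := by
    rw [hsucc, add_smul, one_smul, add_left_inj, ← hshift, ← smul_mul_assoc, u.isUnit.mul_left_inj]
  induction m with
  | zero => simp [Ring.lie_def]
  | succ m ih => simpa using (hsucc_iff m).2 ih
  | pred m ih => exact (hsucc_iff (-m - 1)).1 (by simpa using ih)

theorem lie_mul_add_mul_of_commute {x y : R} (hxy : Commute x y) (M : R) :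
    ⁅M * x + x * M, y⁆ = -(⁅y, M⁆ * x + x * ⁅y, M⁆) := by
  simp only [Ring.lie_def, add_mul, mul_add, sub_mul, mul_sub, mul_assoc, hxy.eq, hxy.left_comm]
  abel

theorem lie_additionalGenerator_zpow (h : ⁅(u : R), M⁆ = 1) (l m : ℤ) :
    ⁅additionalGenerator u M l, ((u ^ m : Rˣ) : R)⁆
      = -((2 * m) • ((u ^ (l + m - 1) : Rˣ) : R)) := by
  have hcomm : Commute ((u ^ l : Rˣ) : R) ((u ^ m : Rˣ) : R) :=
    (Commute.zpow_zpow_self u l m).units_val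
  have hmul : ((u ^ l : Rˣ) : R) * ((u ^ (m - 1) : Rˣ) : R) = ((u ^ (l + m - 1) : Rˣ) : R) := by
    rw [← Units.val_mul, ← zpow_add, add_sub_assoc]
  have hmul' : ((u ^ (m - 1) : Rˣ) : R) * ((u ^ l : Rˣ) : R) = ((u ^ (l + m - 1) : Rˣ) : R) := by
    rw [← Units.val_mul, ← zpow_add, sub_add_eq_add_sub, add_comm]
  rw [additionalGenerator, lie_mul_add_mul_of_commute hcomm, lie_zpow_eq_zsmul h, smul_mul_assoc,
    mul_smul_comm, hmul, hmul', ← add_smul, two_mul]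

end CanonicalPair

/-- The coefficient functions of pseudo-differential operators, i.e. those bounded above. -/
def boundedCoeffs (A : Type*) [CommRing A] : AddSubgroup (ℤ → A) where
  carrier := {a | pdoBdd a}
  zero_mem' := ⟨0, fun _ _ => rfl⟩
  add_mem' := pdoBdd_add
  neg_mem' := fun ⟨N, ha⟩ => ⟨N, fun i hi => by simp [ha i hi]⟩

/-- The ring of pseudo-differential operators over the differential ring `(A, d)`. The type does
not involve `d`, which only enters through the multiplication. -/
def PDO (_ : Derivation ℤ A A) : Type _ := boundedCoeffs A

namespace PDO

attribute [local instance] LieRing.ofAssociativeRing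

variable {d : Derivation ℤ A A}

instance : AddCommGroup (PDO d) := inferInstanceAs (AddCommGroup (boundedCoeffs A))

/-- The coefficient function of an operator. -/
def coeff : PDO d →+ ℤ → A := (boundedCoeffs A).subtype

theorem pdoBdd_coeff (P : PDO d) : pdoBdd (coeff P) := P.2

theorem coeff_injective : Function.Injective (coeff : PDO d → ℤ → A) := Subtype.coe_injective

instance : One (PDO d) := ⟨⟨pdoOne, pdoBdd_pdoOne⟩⟩

instance : Mul (PDO d) := ⟨fun P Q => ⟨pdoMul d P.1 Q.1, pdoBdd_pdoMul P.2 Q.2⟩⟩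

theorem coeff_one : coeff (1 : PDO d) = pdoOne := rfl

theorem coeff_mul (P Q : PDO d) : coeff (P * Q) = pdoMul d (coeff P) (coeff Q) := rfl

instance : Ring (PDO d) where
  __ := (inferInstance : AddCommGroup (PDO d))
  mul_assoc P Q S := coeff_injective (pdoMul_assoc P.2 Q.2 S.2)
  one_mul P := coeff_injective (pdoOne_pdoMul P.1)
  mul_one P := coeff_injective (pdoMul_pdoOne P.1)
  left_distrib P Q S := coeff_injective (pdoMul_add_right P.2 Q.2 S.2)
  right_distrib P Q S := coeff_injective (pdoMul_add_left P.2 Q.2 S.2)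
  zero_mul P := coeff_injective (by funext k; simp [coeff_mul, pdoMul])
  mul_zero P := coeff_injective (by
    funext k; simp [coeff_mul, pdoMul_eq_finsum_monomialMulCoeff])

theorem coeff_pow (P : PDO d) (m : ℕ) : coeff (P ^ m) = pdoPow d (coeff P) m := by
  induction m with
  | zero => rw [pow_zero, coeff_one, pdoPow]
  | succ m ih => rw [pow_succ', coeff_mul, ih, pdoPow]

theorem coeff_zpow (u : (PDO d)ˣ) (m : ℤ) :
    coeff ((u ^ m : (PDO d)ˣ) : PDO d)
      = pdoZpow d (coeff (u : PDO d)) (coeff ((u⁻¹ : (PDO d)ˣ) : PDO d)) m := by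
  obtain ⟨n, rfl | rfl⟩ := m.eq_nat_or_neg
  · rw [pdoZpow, if_pos (by lia), Int.toNat_natCast, zpow_natCast, Units.val_pow_eq_pow_val,
      coeff_pow]
  · obtain rfl | hn := n.eq_zero_or_pos
    · simp [pdoZpow, coeff_one, pdoPow]
    · rw [pdoZpow, if_neg (by lia), neg_neg, Int.toNat_natCast, zpow_neg, ← inv_zpow,
        zpow_natCast, Units.val_pow_eq_pow_val, coeff_pow]

/-- The projection `P ↦ P_-` onto the part of negative degree. -/
def negPart : PDO d →+ PDO d :=
  AddMonoidHom.mk'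
    (fun P => ⟨pdoNegPart (coeff P), (pdoBdd_coeff P).imp fun N hN i hi => by
      simp [pdoNegPart, hN i hi]⟩)
    fun P Q => coeff_injective (pdoNegPart_add (coeff P) (coeff Q))

theorem coeff_negPart (P : PDO d) : coeff (negPart P) = pdoNegPart (coeff P) := rfl

theorem negPart_negPart (P : PDO d) : negPart (negPart P) = negPart P :=
  coeff_injective (by funext k; simp +contextual [coeff_negPart, pdoNegPart])

/-- The differential operators: the operators `P` with `P_- = 0`. -/
def differentialOperators (d : Derivation ℤ A A) : Subring (PDO d) :=
  { (negPart : PDO d →+ PDO d).ker with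
    mul_mem' := fun hP hQ => coeff_injective <|
      pdoNegPart_pdoMul_eq_zero (congrArg coeff hP) (congrArg coeff hQ)
    one_mem' := coeff_injective (by
      rw [coeff_negPart, coeff_one, map_zero, pdoNegPart_eq_zero_iff]
      exact fun k hk => if_neg hk.ne) }

theorem mem_differentialOperators {P : PDO d} : P ∈ differentialOperators d ↔ negPart P = 0 :=
  AddMonoidHom.mem_ker

theorem negPart_lie_negPart (P : PDO d) {Q : PDO d} (hQ : Q ∈ differentialOperators d) :
    negPart ⁅negPart P, Q⁆ = negPart ⁅P, Q⁆ := by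
  have hP : P - negPart P ∈ differentialOperators d := by
    rw [mem_differentialOperators, map_sub, negPart_negPart, sub_self]
  have hlie : ⁅P - negPart P, Q⁆ ∈ differentialOperators d := by
    rw [Ring.lie_def]
    exact sub_mem (mul_mem hP hQ) (mul_mem hQ hP)
  rw [mem_differentialOperators, sub_lie, map_sub, sub_eq_zero] at hlie
  exact hlie.symm

variable {u : (PDO d)ˣ} {p : ℕ}

theorem negPart_lie_neg_negPart_additionalGenerator {M : PDO d} (h : ⁅(u : PDO d), M⁆ = 1)
    (hp : (u : PDO d) ^ p ∈ differentialOperators d) (j : ℤ) :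
    negPart ⁅-negPart (additionalGenerator u M (p * j + 1)), (u : PDO d) ^ p⁆
      = (2 * p) • negPart ((u ^ (p * (j + 1)) : (PDO d)ˣ) : PDO d) := by
  have hlie := lie_additionalGenerator_zpow h (p * j + 1) p
  rw [zpow_natCast, Units.val_pow_eq_pow_val, show p * j + 1 + p - 1 = p * (j + 1) by ring] at hlie
  rw [neg_lie, map_neg, negPart_lie_negPart _ hp, hlie, map_neg, neg_neg, map_zsmul]
  exact mod_cast natCast_zsmul (negPart _) (2 * p)

theorem zpow_mul_mem_differentialOperators (hp : (u : PDO d) ^ p ∈ differentialOperators d)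
    {m : ℤ} (hm : 0 ≤ m) :
    ((u ^ (p * m) : (PDO d)ˣ) : PDO d) ∈ differentialOperators d := by
  obtain ⟨k, rfl⟩ := Int.eq_ofNat_of_zero_le hm
  rw [zpow_mul, zpow_natCast, zpow_natCast, Units.val_pow_eq_pow_val, Units.val_pow_eq_pow_val]
  exact pow_mem hp k

end PDO

open PDO in
theorem reduced_additional_symmetry_general (d : A → A)
    (hd_add : ∀ x y : A, d (x + y) = d x + d y)
    (hd_leibniz : ∀ x y : A, d (x * y) = d x * y + x * d y)
    (p : ℕ) (L : ℤ → A) (hL : pdoBdd L) (hLp : pdoNegPart (pdoPow d L p) = 0)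
    (Li : ℤ → A) (hLi : pdoBdd Li)
    (hLLi : pdoMul d L Li = pdoOne) (hLiL : pdoMul d Li L = pdoOne)
    (M : ℤ → A) (hM : pdoBdd M)
    (hLM : pdoMul d L M - pdoMul d M L = pdoOne) (j : ℤ) :
    pdoNegPart
        (pdoMul d (-(pdoNegPart
            (pdoMul d M (pdoZpow d L Li (p * j + 1))
              + pdoMul d (pdoZpow d L Li (p * j + 1)) M)))
          (pdoPow d L p)
        - pdoMul d (pdoPow d L p)
            (-(pdoNegPart
              (pdoMul d M (pdoZpow d L Li (p * j + 1))
                + pdoMul d (pdoZpow d L Li (p * j + 1)) M))))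
      = ((2 * p : ℕ) : A) • pdoNegPart (pdoZpow d L Li (p * (j + 1)))
    ∧ (-1 ≤ j → pdoNegPart (pdoZpow d L Li (p * (j + 1))) = 0) := by
  obtain ⟨d, rfl⟩ : ∃ D : Derivation ℤ A A, ⇑D = d :=
    ⟨Derivation.mk' (AddMonoidHom.mk' d hd_add).toIntLinearMap fun x y => by
      change d (x * y) = x * d y + y * d x
      rw [hd_leibniz]; ring, rfl⟩
  let u : (PDO d)ˣ :=
    ⟨⟨L, hL⟩, ⟨Li, hLi⟩, coeff_injective hLLi, coeff_injective hLiL⟩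
  let m : PDO d := ⟨M, hM⟩
  have hum : ⁅(u : PDO d), m⁆ = 1 := coeff_injective hLM
  have hu (l : ℤ) : coeff ((u ^ l : (PDO d)ˣ) : PDO d) = pdoZpow d L Li l := coeff_zpow u l
  have hup (l : ℕ) : coeff ((u : PDO d) ^ l) = pdoPow d L l := coeff_pow _ l
  have hp : (u : PDO d) ^ p ∈ differentialOperators d :=
    mem_differentialOperators.2 (coeff_injective (by rw [coeff_negPart, hup, hLp, map_zero]))
  rw [Nat.cast_smul_eq_nsmul, ← hu, ← hu, ← hup]
  exact ⟨congrArg coeff (negPart_lie_neg_negPart_additionalGenerator hum hp j), fun hj =>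
    congrArg coeff (mem_differentialOperators.1
      (zpow_mul_mem_differentialOperators hp (by lia)))⟩

/-- Let `L = D + ∑_{i≥1} v_i D^{-i}` with `L* = -L` and
`(L^{2n})_- = 0` (`n ≥ 1`), let `L⁻¹` be its inverse, and let `M` (in the
algebra of pseudo-differential operators) satisfy `[L, M] = 1` and `M* = M`.
With `A_{1,l} = M L^l + L^l M`, for every `j ≥ -1` one has
`[-(A_{1,2nj+1})_-, L^{2n}]_- = 4n (L^{2n(j+1)})_-` and this vanishes. -/
theorem reduced_additional_symmetry (d : A → A)
    (hd_add : ∀ x y : A, d (x + y) = d x + d y)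
    (hd_leibniz : ∀ x y : A, d (x * y) = d x * y + x * d y)
    (n : ℕ) (hn : 1 ≤ n)
    (L : ℤ → A) (hL1 : L 1 = 1) (hL0 : L 0 = 0) (hLhigh : ∀ i : ℤ, 2 ≤ i → L i = 0)
    (hLadj : pdoAdj d L = -L)
    (hL2n : pdoNegPart (pdoPow d L (2 * n)) = 0)
    (Li : ℤ → A) (hLi : pdoBdd Li)
    (hLLi : pdoMul d L Li = pdoOne) (hLiL : pdoMul d Li L = pdoOne)
    (M : ℤ → A) (hM : pdoBdd M) (hMadj : pdoAdj d M = M)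
    (hLM : pdoMul d L M - pdoMul d M L = pdoOne)
    (j : ℤ) (hj : -1 ≤ j) :
    pdoNegPart
        (pdoMul d (-(pdoNegPart
            (pdoMul d M (pdoZpow d L Li (2 * (n : ℤ) * j + 1))
              + pdoMul d (pdoZpow d L Li (2 * (n : ℤ) * j + 1)) M)))
          (pdoPow d L (2 * n))
        - pdoMul d (pdoPow d L (2 * n))
            (-(pdoNegPart
              (pdoMul d M (pdoZpow d L Li (2 * (n : ℤ) * j + 1))
                + pdoMul d (pdoZpow d L Li (2 * (n : ℤ) * j + 1)) M))))
      = ((4 * n : ℕ) : A) • pdoNegPart (pdoZpow d L Li (2 * (n : ℤ) * (j + 1)))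
    ∧ pdoNegPart (pdoZpow d L Li (2 * (n : ℤ) * (j + 1))) = 0 := by
  have h := reduced_additional_symmetry_general d hd_add hd_leibniz (2 * n) L
    ⟨1, fun i hi => hLhigh i (by lia)⟩ hL2n Li hLi hLLi hLiL M hM hLM j
  rw [← mul_assoc] at h
  exact ⟨h.1, h.2 hj⟩
end
end
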